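/- (Fused first Ghoshal–Zamolodchikov relation.) Let I ≥ 1 be an integer, 0 < q < 1, and 𝔞, 𝔠 ∈ ℝ. Let u ∈ ℂ \ {0} be such that 𝔠·(u q^{(I+1)/2−a})² + u q^{(I+1)/2−a} − 𝔞 ≠ 0 for each 1 ≤ a ≤ I and u²·q^m ≠ 1 for every integer m with −I ≤ m ≤ I. Then for all integers 0 ≤ d ≤ I and all h ∈ H: W(M^I_d(u)·h) = Σ_{a=0}^{I} K^I(u)_a^d · W(M^I_a(u⁻¹)·h). -/

import Mathlib

open scoped Matrix ComplexOrder

noncomputable section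

/-- Entries `R(u)_{a,b}^{c,d}` of the unfused stochastic six-vertex `R`-matrix. -/
def Rent (q u : ℂ) (a b c d : Fin 2) : ℂ :=
  if a = 0 ∧ b = 0 ∧ c = 0 ∧ d = 0 then 1
  else if a = 1 ∧ b = 1 ∧ c = 1 ∧ d = 1 then 1
  else if a = 0 ∧ b = 1 ∧ c = 0 ∧ d = 1 then q * (1 - u) / (1 - q * u)
  else if a = 0 ∧ b = 1 ∧ c = 1 ∧ d = 0 then (1 - q) / (1 - q * u)
  else if a = 1 ∧ b = 0 ∧ c = 0 ∧ d = 1 then u * (1 - q) / (1 - q * u)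
  else if a = 1 ∧ b = 0 ∧ c = 1 ∧ d = 0 then (1 - u) / (1 - q * u)
  else 0

/-- The unfused `R`-matrix as an operator (matrix) on `ℂ² ⊗ ℂ²`;
row index `(c,d)` (output), column index `(a,b)` (input), so that
`R(u)(e_a ⊗ e_b) = Σ_{c,d} R(u)_{a,b}^{c,d} e_c ⊗ e_d`. -/
def Rmat (q u : ℂ) : Matrix (Fin 2 × Fin 2) (Fin 2 × Fin 2) ℂ :=
  fun cd ab => Rent q u ab.1 ab.2 cd.1 cd.2

/-- Entries `K(u)_a^d` of the unfused boundary `K`-matrix, parameters `fa = 𝔞`, `fc = 𝔠`. -/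
def Kent (fa fc u : ℂ) (a d : Fin 2) : ℂ :=
  if a = 0 ∧ d = 0 then ((fc - fa) * u ^ 2 + u) / (fc * u ^ 2 + u - fa)
  else if a = 0 ∧ d = 1 then fa * (u ^ 2 - 1) / (fc * u ^ 2 + u - fa)
  else if a = 1 ∧ d = 0 then fc * (u ^ 2 - 1) / (fc * u ^ 2 + u - fa)
  else (fc - fa + u) / (fc * u ^ 2 + u - fa)

/-- The unfused `K`-matrix as an operator on `ℂ²`: row `d` (output), column `a` (input). -/
def Kmat (fa fc u : ℂ) : Matrix (Fin 2) (Fin 2) ℂ := fun d a => Kent fa fc u a d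

/-- Entries `K̄(u)_b^c` of the unfused boundary `K̄`-matrix, parameters `fb = 𝔟`, `fd = 𝔡`. -/
def Kbent (fb fd u : ℂ) (b c : Fin 2) : ℂ :=
  if b = 0 ∧ c = 0 then ((fb - fd) * u ^ 2 - u) / (fb * u ^ 2 - u - fd)
  else if b = 0 ∧ c = 1 then fd * (u ^ 2 - 1) / (fb * u ^ 2 - u - fd)
  else if b = 1 ∧ c = 0 then fb * (u ^ 2 - 1) / (fb * u ^ 2 - u - fd)
  else (fb - fd - u) / (fb * u ^ 2 - u - fd)

/-- The operator `P` on `ℂ² ⊗ ℂ²` swapping the two tensor factors. -/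
def swapMat : Matrix (Fin 2 × Fin 2) (Fin 2 × Fin 2) ℂ :=
  fun p r => if p.1 = r.2 ∧ p.2 = r.1 then 1 else 0

/-- `Ř(u) = P ∘ R(u)`. -/
def RcheckMat (q u : ℂ) : Matrix (Fin 2 × Fin 2) (Fin 2 × Fin 2) ℂ := swapMat * Rmat q u

/-- A two-site operator `T` placed at sites `i, j` of an `n`-fold tensor power of `ℂ²`,
acting as the identity on the other factors.  Here `(ℂ²)^{⊗n}` is identified with the
function space `(Fin n → Fin 2) → ℂ` with its standard basis. -/
def emb2 {n : ℕ} (i j : Fin n) (T : Matrix (Fin 2 × Fin 2) (Fin 2 × Fin 2) ℂ) :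
    Matrix (Fin n → Fin 2) (Fin n → Fin 2) ℂ :=
  fun x y => T (x i, x j) (y i, y j) * (if ∀ k, k ≠ i → k ≠ j → x k = y k then 1 else 0)

/-- A one-site operator `T` placed at site `i` of an `n`-fold tensor power of `ℂ²`. -/
def emb1 {n : ℕ} (i : Fin n) (T : Matrix (Fin 2) (Fin 2) ℂ) :
    Matrix (Fin n → Fin 2) (Fin n → Fin 2) ℂ :=
  fun x y => T (x i) (y i) * (if ∀ k, k ≠ i → x k = y k then 1 else 0)

/-- The permutation operator `P_ω` on `(ℂ²)^{⊗n}`: it puts the `k`-th factor in position `ω(k)`. -/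
def permMat (n : ℕ) (ω : Equiv.Perm (Fin n)) :
    Matrix (Fin n → Fin 2) (Fin n → Fin 2) ℂ :=
  fun x y => if (fun k => x (ω k)) = y then 1 else 0

/-- `inv(a)` : the number of inversions of a `{0,1}`-word. -/
def invCount {I : ℕ} (x : Fin I → Fin 2) : ℕ :=
  (Finset.univ.filter (fun p : Fin I × Fin I => p.1 < p.2 ∧ x p.2 < x p.1)).card

/-- `Z_q(I;m)`. -/
def Zq (I : ℕ) (q : ℂ) (m : ℕ) : ℂ :=
  ∑ x ∈ Finset.univ.filter (fun x : Fin I → Fin 2 => (∑ j, ((x j : ℕ))) = m),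
    q ^ invCount x

/-- The projection `Π : (ℂ²)^{⊗I} → ℂ^{I+1}`, `e_{a₁…a_I} ↦ e_{Σ a_j}`. -/
def PiMat (I : ℕ) : Matrix (Fin (I + 1)) (Fin I → Fin 2) ℂ :=
  fun m x => if (∑ j, ((x j : ℕ))) = (m : ℕ) then 1 else 0

/-- The injection `Π̂ : ℂ^{I+1} → (ℂ²)^{⊗I}`. -/
def hatPiMat (I : ℕ) (q : ℂ) : Matrix (Fin I → Fin 2) (Fin (I + 1)) ℂ :=
  fun x m => if (∑ j, ((x j : ℕ))) = (m : ℕ) then q ^ invCount x / Zq I q (m : ℕ) else 0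

/-- `F = Π̂ ∘ Π`, the projector onto the `q`-exchangeable subspace. -/
def Fmat (I : ℕ) (q : ℂ) : Matrix (Fin I → Fin 2) (Fin I → Fin 2) ℂ :=
  hatPiMat I q * PiMat I

/-- Restriction of a configuration on `2I` sites to the first `I` sites. -/
def firstHalf {I : ℕ} (x : Fin (2 * I) → Fin 2) : Fin I → Fin 2 :=
  fun k => x ⟨k.1, by have := k.isLt; omega⟩

/-- Restriction of a configuration on `2I` sites to the last `I` sites. -/
def secondHalf {I : ℕ} (x : Fin (2 * I) → Fin 2) : Fin I → Fin 2 :=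
  fun k => x ⟨k.1 + I, by have := k.isLt; omega⟩

/-- `F ⊗ F` acting on `(ℂ²)^{⊗2I}`. -/
def FFmat (I : ℕ) (q : ℂ) : Matrix (Fin (2 * I) → Fin 2) (Fin (2 * I) → Fin 2) ℂ :=
  fun x y => Fmat I q (firstHalf x) (firstHalf y) * Fmat I q (secondHalf x) (secondHalf y)

/-- `Π ⊗ Π : (ℂ²)^{⊗2I} → ℂ^{I+1} ⊗ ℂ^{I+1}`. -/
def PiPiMat (I : ℕ) : Matrix (Fin (I + 1) × Fin (I + 1)) (Fin (2 * I) → Fin 2) ℂ :=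
  fun p x => PiMat I p.1 (firstHalf x) * PiMat I p.2 (secondHalf x)

/-- `Π̂ ⊗ Π̂ : ℂ^{I+1} ⊗ ℂ^{I+1} → (ℂ²)^{⊗2I}`. -/
def hatPiPiMat (I : ℕ) (q : ℂ) : Matrix (Fin (2 * I) → Fin 2) (Fin (I + 1) × Fin (I + 1)) ℂ :=
  fun x p => hatPiMat I q (firstHalf x) p.1 * hatPiMat I q (secondHalf x) p.2

/-- The fused bulk operator `R̊^I(u)` on `(ℂ²)^{⊗2I}` : the ordered product (composition,
factors written from left to right) over `a = I, I-1, …, 1` and, inside, `b = 1, 2, …, I`,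
of the operators `R(u q^{b-a})_{b, a+I}` (sites are 1-based; here `a = I - a'`, `b = b' + 1`). -/
def Rring (I : ℕ) (q u : ℂ) : Matrix (Fin (2 * I) → Fin 2) (Fin (2 * I) → Fin 2) ℂ :=
  ((List.finRange I).map (fun a' =>
    ((List.finRange I).map (fun b' =>
      emb2 (⟨b'.1, by have := b'.isLt; omega⟩ : Fin (2 * I))
        ⟨2 * I - 1 - a'.1, by have := a'.isLt; omega⟩
        (Rmat q (u * q ^ (((b'.1 : ℤ) + 1) - ((I : ℤ) - (a'.1 : ℤ))))))).prod)).prod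

/-- The fused `R`-matrix `R^I(u) = (Π⊗Π) ∘ R̊^I(u) ∘ (Π̂⊗Π̂)` on `ℂ^{I+1} ⊗ ℂ^{I+1}`;
its entry at row `(c,d)`, column `(a,b)` is `R^I(u)_{a,b}^{c,d}`. -/
def RI (I : ℕ) (q u : ℂ) :
    Matrix (Fin (I + 1) × Fin (I + 1)) (Fin (I + 1) × Fin (I + 1)) ℂ :=
  PiPiMat I * Rring I q u * hatPiPiMat I q

/-- Real powers of a positive real number, viewed in `ℂ`. -/
def qrpow (q : ℝ) (r : ℝ) : ℂ := ((q ^ r : ℝ) : ℂ)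

/-- The fused boundary operator `K̊^I(u)` on `(ℂ²)^{⊗I}` : `P_rev` composed with the ordered
product over `a = I, …, 1` of `K(u q^{(I+1)/2-a})_a` composed with the ordered product over
`b = a-1, …, 1` of `R(u² q^{I+1-a-b})_{b,a}` (sites 1-based; `a = I - a'`, `b = a - 1 - b'`). -/
def Kring (I : ℕ) (q : ℝ) (fa fc : ℂ) (u : ℂ) :
    Matrix (Fin I → Fin 2) (Fin I → Fin 2) ℂ :=
  permMat I (Fin.revPerm) *
  ((List.finRange I).map (fun a' =>
    emb1 (⟨I - 1 - a'.1, by have := a'.isLt; omega⟩ : Fin I)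
        (Kmat fa fc (u * qrpow q (((I : ℝ) + 1) / 2 - ((I : ℝ) - (a'.1 : ℝ))))) *
    ((List.finRange (I - 1 - a'.1)).map (fun b' =>
      emb2 (⟨I - a'.1 - 2 - b'.1, by have := a'.isLt; have := b'.isLt; omega⟩ : Fin I)
        ⟨I - 1 - a'.1, by have := a'.isLt; omega⟩
        (Rmat (q : ℂ)
          (u ^ 2 * (q : ℂ) ^ (((I : ℤ) + 1) - ((I : ℤ) - (a'.1 : ℤ)) -
            ((I : ℤ) - (a'.1 : ℤ) - 1 - (b'.1 : ℤ))))))).prod)).prod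

/-- The fused `K`-matrix `K^I(u) = Π ∘ K̊^I(u) ∘ Π̂` on `ℂ^{I+1}`;
its entry at row `d`, column `a` is `K^I(u)_a^d`. -/
def KI (I : ℕ) (q : ℝ) (fa fc u : ℂ) : Matrix (Fin (I + 1)) (Fin (I + 1)) ℂ :=
  PiMat I * Kring I q fa fc u * hatPiMat I (q : ℂ)

/-- `M₀(u) = u·1 + 𝐞`, `M₁(u) = u⁻¹·1 + 𝐝` in a ℂ-algebra `A`. -/
def Mop {A : Type*} [Ring A] [Algebra ℂ A] (dd ee : A) (i : Fin 2) (u : ℂ) : A :=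
  if i = 0 then algebraMap ℂ A u + ee else algebraMap ℂ A u⁻¹ + dd

/-- The fused elements `M^I_ζ(u)`. -/
def MIop {A : Type*} [Ring A] [Algebra ℂ A] (dd ee : A) (I : ℕ) (q : ℝ) (ζ : ℕ) (u : ℂ) : A :=
  ∑ z ∈ Finset.univ.filter (fun z : Fin I → Fin 2 => (∑ j, ((z j : ℕ))) = ζ),
    ((List.finRange I).map (fun a =>
      Mop dd ee (z a) (u * qrpow q (((a.1 : ℝ) + 1) - ((I : ℝ) + 1) / 2)))).prod

end

/-! The fused `M^I_ζ(u)` form the image under `Π` of a vector, indexed by `{0,1}`-words, of ordered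
products of the unfused `M`. An `R`-matrix interchanges two neighbouring factors of such a product
(the Zamolodchikov–Faddeev relation, a consequence of `𝐝𝐞 − q𝐞𝐝 = 1 − q`), and a `K`-matrix inverts
the spectral parameter of the leftmost factor (the boundary condition on `W`). So `K̊^I(u)`, which
brings each factor in turn to the front and reflects it there, inverts all parameters and reverses
the order of the factors; `P_rev` restores the order of the sites. Since the spectral parameters
form a geometric progression of ratio `q`, the unfused vector is `q`-exchangeable, hence fixed by
`Π̂ ∘ Π`, and the unfused identity descends to the fused matrix `Π ∘ K̊^I(u) ∘ Π̂`. -/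

open Matrix

section SiteOperators

variable {n : ℕ} (f : (Fin n → Fin 2) → ℂ) (x : Fin n → Fin 2)

theorem emb1_mulVec (i : Fin n) (T : Matrix (Fin 2) (Fin 2) ℂ) :
    (emb1 i T *ᵥ f) x = ∑ p, T (x i) p * f (Function.update x i p) := by
  simp only [mulVec, dotProduct, emb1]
  refine (Finset.sum_of_injOn (Function.update x i) (Function.update_injective x i).injOn
    (by simp) (fun y _ hy => ?_) fun p _ => ?_).symm
  · have hxy : ¬ ∀ k, k ≠ i → x k = y k := fun h =>
      hy ⟨y i, by simp, Function.update_eq_iff.2 ⟨rfl, h⟩⟩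
    simp [hxy]
  · simp +contextual

theorem emb2_mulVec {i j : Fin n} (hij : i ≠ j)
    (T : Matrix (Fin 2 × Fin 2) (Fin 2 × Fin 2) ℂ) :
    (emb2 i j T *ᵥ f) x = ∑ p : Fin 2 × Fin 2, T (x i, x j) p *
      f (Function.update (Function.update x i p.1) j p.2) := by
  simp only [mulVec, dotProduct, emb2]
  refine (Finset.sum_of_injOn (fun p => Function.update (Function.update x i p.1) j p.2)
    (fun p _ r _ hpr => ?_) (by simp) (fun y _ hy => ?_) fun p _ => ?_).symm
  · have hi := congrFun hpr i
    have hj := congrFun hpr j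
    simp only [Function.update_of_ne hij, Function.update_self] at hi hj
    exact Prod.ext hi hj
  · have hxy : ¬ ∀ k, k ≠ i → k ≠ j → x k = y k := fun h =>
      hy ⟨(y i, y j), by simp, Function.update_eq_iff.2 ⟨rfl, fun k hkj => by
        by_cases hki : k = i
        · simp [hki]
        · simp [hki, h k hki hkj]⟩⟩
    simp [hxy]
  · simp +contextual [Function.update_of_ne hij]

theorem permMat_mulVec (ω : Equiv.Perm (Fin n)) :
    (permMat n ω *ᵥ f) x = f (fun k => x (ω k)) := by
  simp [mulVec, dotProduct, permMat]

end SiteOperators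

section UnfusedRelations

variable {A : Type*} [Ring A] [Algebra ℂ A] {dd ee : A}

theorem Mop_zero (v : ℂ) : Mop dd ee 0 v = v • (1 : A) + ee := by
  simp [Mop, Algebra.algebraMap_eq_smul_one]

theorem Mop_one (v : ℂ) : Mop dd ee 1 v = v⁻¹ • (1 : A) + dd := by
  simp [Mop, Algebra.algebraMap_eq_smul_one]

/-- The Zamolodchikov–Faddeev relation. -/
theorem sum_Rmat_smul_Mop_mul_Mop {q : ℂ}
    (hde : dd * ee - q • (ee * dd) = (1 - q) • (1 : A)) {v w : ℂ} (hv : v ≠ 0) (hw : w ≠ 0)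
    (hvw : q * (v / w) ≠ 1) (c d : Fin 2) :
    ∑ p : Fin 2 × Fin 2, Rmat q (v / w) (c, d) p • (Mop dd ee p.1 v * Mop dd ee p.2 w) =
      Mop dd ee d w * Mop dd ee c v := by
  have hde' : dd * ee = q • (ee * dd) + (1 - q) • (1 : A) := eq_add_of_sub_eq' hde
  have hden : w - q * v ≠ 0 := fun h => hvw (by field_simp; exact (sub_eq_zero.1 h).symm)
  fin_cases c <;> fin_cases d <;>
    simp only [Fintype.sum_prod_type, Fin.sum_univ_two, Fin.zero_eta, Fin.mk_one, Fin.isValue, Rmat,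
      Rent, one_ne_zero, zero_ne_one, and_true, and_false, and_self, if_true, if_false, zero_smul,
      one_smul, add_zero, zero_add, Mop_zero, Mop_one, add_mul, mul_add, smul_mul_assoc,
      mul_smul_comm, mul_one, one_mul, hde']
  · module
  · match_scalars <;> field_simp <;> ring
  · match_scalars <;> field_simp <;> ring
  · module

theorem Mop_one_mul_Mop_zero {q : ℂ} (hq : q ≠ 0)
    (hde : dd * ee - q • (ee * dd) = (1 - q) • (1 : A)) {v : ℂ} (hv : v ≠ 0) :
    Mop dd ee 1 v * Mop dd ee 0 (q * v) = q • (Mop dd ee 0 v * Mop dd ee 1 (q * v)) := by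
  have hde' : dd * ee = q • (ee * dd) + (1 - q) • (1 : A) := eq_add_of_sub_eq' hde
  simp only [Mop_zero, Mop_one, add_mul, mul_add, smul_mul_assoc, mul_smul_comm, mul_one, one_mul,
    hde']
  match_scalars <;> field_simp
  ring

/-- The unfused Ghoshal–Zamolodchikov relation. -/
theorem sum_Kmat_mul_map_Mop {fa fc : ℂ} (φ : A →ₗ[ℂ] ℂ) {m : A}
    (hm : φ ((fa • ee - fc • dd + 1) * m) = 0) {v : ℂ} (hv : v ≠ 0)
    (hden : fc * v ^ 2 + v - fa ≠ 0) (b : Fin 2) :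
    ∑ p, Kmat fa fc v b p * φ (Mop dd ee p v⁻¹ * m) = φ (Mop dd ee b v * m) := by
  have h0 : fa * φ (ee * m) - fc * φ (dd * m) + φ m = 0 := by
    simpa [add_mul, sub_mul] using hm
  have hM0 (t : ℂ) : φ (Mop dd ee 0 t * m) = t * φ m + φ (ee * m) := by
    simp [Mop_zero, add_mul]
  have hM1 (t : ℂ) : φ (Mop dd ee 1 t * m) = t⁻¹ * φ m + φ (dd * m) := by
    simp [Mop_one, add_mul]
  rw [Fin.sum_univ_two]
  fin_cases b <;> simp only [Fin.zero_eta, Fin.mk_one, hM0, hM1, Kmat, Kent,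
    Fin.isValue, one_ne_zero, zero_ne_one, and_true, and_false, and_self, if_true, if_false,
    inv_inv] <;>
    rw [div_mul_eq_mul_div, div_mul_eq_mul_div, ← add_div, div_eq_iff hden]
  · field_simp
    linear_combination (-(v ^ 2 - 1)) * h0
  · field_simp
    linear_combination (v * (v ^ 2 - 1)) * h0

end UnfusedRelations

section SiteProducts

variable {A : Type*} [Ring A] [Algebra ℂ A] {n : ℕ}

/-- The ordered product of the `M_{x i}(v)` over a list of pairs `(i, v)` of a site and the spectral
parameter attached to it. The order of the factors is that of the list, not that of the sites. -/
noncomputable def siteProd (dd ee : A) (L : List (Fin n × ℂ)) (x : Fin n → Fin 2) : A :=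
  (L.map fun p => Mop dd ee (x p.1) p.2).prod

/-- The vector of `(ℂ²)^{⊗n}` whose coordinates are the values of `φ` at the products
`siteProd dd ee L`. -/
noncomputable def siteVec (dd ee : A) (φ : A →ₗ[ℂ] ℂ) (L : List (Fin n × ℂ)) :
    (Fin n → Fin 2) → ℂ :=
  fun x => φ (siteProd dd ee L x)

theorem siteProd_append (dd ee : A) (L L' : List (Fin n × ℂ)) (x : Fin n → Fin 2) :
    siteProd dd ee (L ++ L') x = siteProd dd ee L x * siteProd dd ee L' x := by
  simp [siteProd]

theorem siteProd_cons (dd ee : A) (p : Fin n × ℂ) (L : List (Fin n × ℂ)) (x : Fin n → Fin 2) :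
    siteProd dd ee (p :: L) x = Mop dd ee (x p.1) p.2 * siteProd dd ee L x := by
  simp [siteProd]

theorem siteProd_update_of_notMem (dd ee : A) {L : List (Fin n × ℂ)} {i : Fin n}
    (hi : i ∉ L.map Prod.fst) (x : Fin n → Fin 2) (b : Fin 2) :
    siteProd dd ee L (Function.update x i b) = siteProd dd ee L x := by
  refine congrArg List.prod (List.map_congr_left fun p hp => ?_)
  rw [Function.update_of_ne]
  rintro rfl
  exact hi (List.mem_map_of_mem hp)

variable {dd ee : A} (φ : A →ₗ[ℂ] ℂ)

theorem emb2_Rmat_mulVec_siteVec {q : ℂ} (hde : dd * ee - q • (ee * dd) = (1 - q) • (1 : A))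
    {i j : Fin n} {v w : ℂ} (hv : v ≠ 0) (hw : w ≠ 0) (hvw : q * (v / w) ≠ 1)
    (L₁ L₂ : List (Fin n × ℂ)) (hL : ((L₁ ++ (i, v) :: (j, w) :: L₂).map Prod.fst).Nodup) :
    emb2 i j (Rmat q (v / w)) *ᵥ siteVec dd ee φ (L₁ ++ (i, v) :: (j, w) :: L₂) =
      siteVec dd ee φ (L₁ ++ (j, w) :: (i, v) :: L₂) := by
  obtain ⟨hij, hi₁, hj₁, hi₂, hj₂⟩ : i ≠ j ∧ i ∉ L₁.map Prod.fst ∧ j ∉ L₁.map Prod.fst ∧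
      i ∉ L₂.map Prod.fst ∧ j ∉ L₂.map Prod.fst := by
    simp only [List.map_append, List.map_cons] at hL
    grind
  ext x
  have hfactor (p : Fin 2 × Fin 2) : siteProd dd ee (L₁ ++ (i, v) :: (j, w) :: L₂)
      (Function.update (Function.update x i p.1) j p.2) =
      siteProd dd ee L₁ x * (Mop dd ee p.1 v * Mop dd ee p.2 w * siteProd dd ee L₂ x) := by
    simp only [siteProd_append, siteProd_cons, siteProd_update_of_notMem dd ee hi₁,
      siteProd_update_of_notMem dd ee hj₁, siteProd_update_of_notMem dd ee hi₂,
      siteProd_update_of_notMem dd ee hj₂, Function.update_self, Function.update_of_ne hij,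
      mul_assoc]
  calc (emb2 i j (Rmat q (v / w)) *ᵥ siteVec dd ee φ (L₁ ++ (i, v) :: (j, w) :: L₂)) x
      = φ (siteProd dd ee L₁ x * ((∑ p : Fin 2 × Fin 2, Rmat q (v / w) (x i, x j) p •
          (Mop dd ee p.1 v * Mop dd ee p.2 w)) * siteProd dd ee L₂ x)) := by
        simp only [emb2_mulVec _ _ hij, siteVec, hfactor, Finset.sum_mul, Finset.mul_sum, map_sum,
          smul_mul_assoc, mul_smul_comm, map_smul, smul_eq_mul]
    _ = siteVec dd ee φ (L₁ ++ (j, w) :: (i, v) :: L₂) x := by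
        rw [sum_Rmat_smul_Mop_mul_Mop hde hv hw hvw]
        simp only [siteVec, siteProd_append, siteProd_cons, mul_assoc]

theorem emb1_Kmat_mulVec_siteVec {fa fc : ℂ} (hφ : ∀ m, φ ((fa • ee - fc • dd + 1) * m) = 0)
    {i : Fin n} {v : ℂ} (hv : v ≠ 0) (hden : fc * v ^ 2 + v - fa ≠ 0) {L : List (Fin n × ℂ)}
    (hi : i ∉ L.map Prod.fst) :
    emb1 i (Kmat fa fc v) *ᵥ siteVec dd ee φ ((i, v⁻¹) :: L) = siteVec dd ee φ ((i, v) :: L) := by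
  ext x
  simp only [emb1_mulVec, siteVec, siteProd_cons, siteProd_update_of_notMem dd ee hi,
    Function.update_self]
  exact sum_Kmat_mul_map_Mop φ (hφ _) hv hden (x i)

theorem prod_emb2_Rmat_mulVec_siteVec {q : ℂ}
    (hde : dd * ee - q • (ee * dd) = (1 - q) • (1 : A)) {w : Fin n → ℂ} (hw : ∀ i, w i ≠ 0)
    (hreg : ∀ i j, i ≠ j → q * (w i * w j) ≠ 1) (a : Fin n) (l : List (Fin n))
    (L₁ L₂ : List (Fin n × ℂ))
    (hL : (L₁.map Prod.fst ++ (l ++ a :: L₂.map Prod.fst)).Nodup) :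
    (l.map fun b => emb2 b a (Rmat q (w b * w a))).prod *ᵥ
        siteVec dd ee φ (L₁ ++ (l.map (fun b => (b, w b)) ++ (a, (w a)⁻¹) :: L₂)) =
      siteVec dd ee φ (L₁ ++ (a, (w a)⁻¹) :: (l.map (fun b => (b, w b)) ++ L₂)) := by
  induction l generalizing L₁ with
  | nil => simp
  | cons b l ih =>
    have hba : b ≠ a := by grind
    have ih' := ih (L₁ ++ [(b, w b)]) (by simpa using hL)
    have hswap := emb2_Rmat_mulVec_siteVec φ hde (i := b) (j := a) (hw b) (inv_ne_zero (hw a))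
      (by simpa using hreg b a hba) L₁ (l.map (fun b => (b, w b)) ++ L₂) (by
        simpa [Function.comp_def] using
          ((List.perm_middle.cons b).append_left _).nodup_iff.1 hL)
    rw [div_inv_eq_mul] at hswap
    simp only [List.append_assoc, List.cons_append, List.nil_append] at ih'
    rw [List.map_cons, List.prod_cons, ← mulVec_mulVec, List.map_cons, List.cons_append, ih',
      hswap, List.cons_append]

end SiteProducts

section Reflection

/-- The ordered product `∏_a (K(w_a)_a ∏_b R(w_b w_a)_{b,a})` of the boundary operator, where `a`
runs through a list of sites and `b` through the sites after `a` in that list. -/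
noncomputable def reflectMat {n : ℕ} (q fa fc : ℂ) (w : Fin n → ℂ) :
    List (Fin n) → Matrix (Fin n → Fin 2) (Fin n → Fin 2) ℂ
  | [] => 1
  | a :: l => emb1 a (Kmat fa fc (w a)) * (l.map fun b => emb2 b a (Rmat q (w b * w a))).prod *
      reflectMat q fa fc w l

theorem reflectMat_mulVec_siteVec {A : Type*} [Ring A] [Algebra ℂ A] {dd ee : A} {q fa fc : ℂ}
    (hde : dd * ee - q • (ee * dd) = (1 - q) • (1 : A)) (φ : A →ₗ[ℂ] ℂ)
    (hφ : ∀ m, φ ((fa • ee - fc • dd + 1) * m) = 0) {n : ℕ} {w : Fin n → ℂ}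
    (hw : ∀ i, w i ≠ 0) (hreg : ∀ i j, i ≠ j → q * (w i * w j) ≠ 1)
    (hden : ∀ i, fc * w i ^ 2 + w i - fa ≠ 0) (l : List (Fin n)) (L : List (Fin n × ℂ))
    (hL : (l ++ L.map Prod.fst).Nodup) :
    reflectMat q fa fc w l *ᵥ siteVec dd ee φ (l.reverse.map (fun a => (a, (w a)⁻¹)) ++ L) =
      siteVec dd ee φ (l.map (fun a => (a, w a)) ++ L) := by
  induction l generalizing L with
  | nil => simp [reflectMat]
  | cons a l ih =>
    have ih' := ih ((a, (w a)⁻¹) :: L) (by simp only [List.map_cons]; grind)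
    have hfront := prod_emb2_Rmat_mulVec_siteVec φ hde hw hreg a l [] L
      (by simp only [List.map_nil, List.nil_append]; grind)
    have hreflect := emb1_Kmat_mulVec_siteVec φ hφ (i := a) (hw a) (hden a)
      (L := l.map (fun b => (b, w b)) ++ L) (by
        simp only [List.map_append, List.map_map, Function.comp_def, List.map_id']
        grind)
    simp only [List.nil_append] at hfront
    rw [reflectMat, ← mulVec_mulVec, ← mulVec_mulVec, List.reverse_cons, List.map_append,
      List.append_assoc, List.map_singleton, List.singleton_append, ih', hfront, hreflect,
      List.map_cons, List.cons_append]

/-- The sites `k - 1, …, 0` of `Fin n`, in decreasing order. -/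
def sitesBelow {n : ℕ} (k : ℕ) (hk : k ≤ n) : List (Fin n) :=
  (List.finRange k).map fun b => b.rev.castLE hk

theorem sitesBelow_succ {n k : ℕ} (hk : k + 1 ≤ n) :
    sitesBelow (k + 1) hk = ⟨k, hk⟩ :: sitesBelow k (Nat.le_of_succ_le hk) := by
  simp only [sitesBelow, List.finRange_succ, List.map_cons, List.map_map, Fin.rev_zero]
  exact congrArg₂ _ rfl (List.map_congr_left fun b _ => by ext; simp [Fin.rev_succ])

theorem sitesBelow_self (n : ℕ) : sitesBelow n le_rfl = (List.finRange n).reverse := by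
  simp [sitesBelow, List.finRange_reverse]

theorem reflectMat_sitesBelow {n : ℕ} (q fa fc : ℂ) (w : Fin n → ℂ) (k : ℕ) (hk : k ≤ n) :
    reflectMat q fa fc w (sitesBelow k hk) =
      ((sitesBelow k hk).map fun a => emb1 a (Kmat fa fc (w a)) *
        ((sitesBelow a a.isLt.le).map fun b => emb2 b a (Rmat q (w b * w a))).prod).prod := by
  induction k with
  | zero => rfl
  | succ k ih => rw [sitesBelow_succ, reflectMat, List.map_cons, List.prod_cons, ih]

end Reflection

section SpectralParameters

theorem qrpow_ne_zero {q : ℝ} (hq : 0 < q) (r : ℝ) : qrpow q r ≠ 0 :=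
  Complex.ofReal_ne_zero.2 (Real.rpow_pos_of_pos hq r).ne'

theorem qrpow_add {q : ℝ} (hq : 0 < q) (r s : ℝ) : qrpow q (r + s) = qrpow q r * qrpow q s := by
  simp [qrpow, Real.rpow_add hq]

theorem qrpow_neg {q : ℝ} (hq : 0 < q) (r : ℝ) : qrpow q (-r) = (qrpow q r)⁻¹ := by
  simp [qrpow, Real.rpow_neg hq.le]

theorem qrpow_intCast (q : ℝ) (m : ℤ) : qrpow q m = (q : ℂ) ^ m := by
  simp [qrpow]

/-- The spectral parameter `u q^{a - (I+1)/2}` of the `a`-th factor of the fused `M^I(u)`; here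
sites are `0`-based, so that the exponent is `a + 1 - (I+1)/2`. -/
noncomputable def spectralParam {I : ℕ} (q : ℝ) (u : ℂ) (a : Fin I) : ℂ :=
  u * qrpow q (((a : ℝ) + 1) - ((I : ℝ) + 1) / 2)

variable {I : ℕ} {q : ℝ}

theorem spectralParam_ne_zero (hq : 0 < q) {u : ℂ} (hu : u ≠ 0) (a : Fin I) :
    spectralParam q u a ≠ 0 :=
  mul_ne_zero hu (qrpow_ne_zero hq _)

theorem spectralParam_rev (u : ℂ) (a : Fin I) :
    spectralParam q u a.rev = u * qrpow q (((I : ℝ) + 1) / 2 - ((a : ℝ) + 1)) := by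
  rw [spectralParam, Fin.val_rev, Nat.cast_sub (by omega)]
  congr 2
  push_cast
  ring

theorem inv_spectralParam_rev (hq : 0 < q) (u : ℂ) (a : Fin I) :
    (spectralParam q u a.rev)⁻¹ = spectralParam q u⁻¹ a := by
  rw [spectralParam_rev, spectralParam, mul_inv, ← qrpow_neg hq, neg_sub]

theorem spectralParam_mul_spectralParam (hq : 0 < q) (u : ℂ) (a b : Fin I) :
    spectralParam q u a * spectralParam q u b = u ^ 2 * (q : ℂ) ^ ((a : ℤ) + b + 1 - I) := by
  rw [spectralParam, spectralParam, mul_mul_mul_comm, ← qrpow_add hq, ← sq, ← qrpow_intCast]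
  congr 2
  push_cast
  ring

theorem spectralParam_eq_mul_pow (hq : 0 < q) (u : ℂ) (a : Fin I) :
    spectralParam q u a = u * qrpow q (1 - ((I : ℝ) + 1) / 2) * (q : ℂ) ^ (a : ℕ) := by
  rw [spectralParam, mul_assoc, ← zpow_natCast, ← qrpow_intCast, ← qrpow_add hq]
  congr 2
  push_cast
  ring

theorem Kring_eq_permMat_mul_reflectMat (hq : 0 < q) (fa fc u : ℂ) :
    Kring I q fa fc u = permMat I Fin.revPerm *
      reflectMat q fa fc (fun a => spectralParam q u a.rev) (List.finRange I).reverse := by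
  rw [← sitesBelow_self, reflectMat_sitesBelow, Kring]
  conv_rhs => rw [sitesBelow]
  rw [List.map_map]
  congr 2
  refine List.map_congr_left fun a _ => ?_
  have ha := a.isLt
  have hsite : (a.rev.castLE le_rfl : Fin I) = ⟨I - 1 - a, by omega⟩ := by
    ext; simp only [Fin.val_castLE, Fin.val_rev]; omega
  have hrev : (⟨I - 1 - a, by omega⟩ : Fin I).rev = a := by
    ext; simp only [Fin.val_rev]; omega
  simp only [Function.comp_apply, hsite, hrev]
  congr 1
  · congr 2
    rw [spectralParam]
    congr 2
    ring
  · rw [sitesBelow, List.map_map]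
    refine congrArg List.prod (List.map_congr_left fun b _ => ?_)
    have hb := b.isLt
    have hsite' : b.rev.castLE (Nat.sub_le_of_le_add (by omega)) =
        (⟨I - a - 2 - b, by omega⟩ : Fin I) := by
      ext; simp only [Fin.val_castLE, Fin.val_rev]; omega
    have hrev' : (((⟨I - a - 2 - b, by omega⟩ : Fin I).rev : ℕ) : ℤ) = a + 1 + b := by
      simp only [Fin.val_rev]; omega
    simp only [Function.comp_apply, hsite', spectralParam_mul_spectralParam hq, hrev']
    congr 4
    ring

end SpectralParameters

section Exchangeability

/-- The number of ones in a `{0,1}`-word. -/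
abbrev wordWeight {n : ℕ} (x : Fin n → Fin 2) : ℕ := ∑ j, (x j : ℕ)

theorem wordWeight_le {n : ℕ} (x : Fin n → Fin 2) : wordWeight x ≤ n := by
  simpa using Finset.sum_le_card_nsmul Finset.univ (fun j => (x j : ℕ)) 1 fun j _ => by omega

theorem card_lt_one_eq_sub_wordWeight {n : ℕ} (x : Fin n → Fin 2) :
    (Finset.univ.filter fun j => x j < 1).card = n - wordWeight x := by
  have hsplit : ∀ b : Fin 2, (if b < 1 then 1 else 0) + (b : ℕ) = 1 := by decide
  have hcount : (Finset.univ.filter fun j => x j < 1).card + wordWeight x = n := by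
    rw [Finset.card_filter, ← Finset.sum_add_distrib]
    simp only [hsplit]
    simp
  omega

theorem invCount_cons {n : ℕ} (b : Fin 2) (x : Fin n → Fin 2) :
    invCount (Fin.cons b x : Fin (n + 1) → Fin 2) =
      (Finset.univ.filter fun j => x j < b).card + invCount x := by
  simp only [invCount, Finset.card_filter, Fintype.sum_prod_type, Fin.sum_univ_succ, Fin.cons_zero,
    Fin.cons_succ, Fin.succ_pos, Fin.succ_lt_succ_iff, Fin.not_lt_zero, true_and,
    false_and, if_false, zero_add]

/-- A vector of `(ℂ²)^{⊗n}` is `q`-exchangeable if its coordinates depend on the word `x` only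
through its weight, up to the factor `q ^ inv(x)`. -/
def IsQExchangeable {n : ℕ} (q : ℂ) (f : (Fin n → Fin 2) → ℂ) : Prop :=
  ∃ S : ℕ → ℂ, ∀ x, f x = q ^ invCount x * S (wordWeight x)

theorem Zq_wordWeight_ne_zero {I : ℕ} {q : ℝ} (hq : 0 < q) (x : Fin I → Fin 2) :
    Zq I q (wordWeight x) ≠ 0 := by
  have hpos : 0 < ∑ z with wordWeight z = wordWeight x, q ^ invCount z :=
    Finset.sum_pos (fun z _ => pow_pos hq _) ⟨x, by simp⟩
  simpa [Zq] using Complex.ofReal_ne_zero.2 hpos.ne'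

theorem PiMat_mulVec {I : ℕ} (f : (Fin I → Fin 2) → ℂ) (m : Fin (I + 1)) :
    (PiMat I *ᵥ f) m = ∑ x with wordWeight x = m, f x := by
  simp [mulVec, dotProduct, PiMat, Finset.sum_filter]

theorem hatPiMat_mulVec {I : ℕ} (q : ℂ) (g : Fin (I + 1) → ℂ) (x : Fin I → Fin 2) :
    (hatPiMat I q *ᵥ g) x = q ^ invCount x / Zq I q (wordWeight x) *
      g ⟨wordWeight x, Nat.lt_succ_of_le (wordWeight_le x)⟩ := by
  rw [mulVec, dotProduct, Finset.sum_eq_single ⟨wordWeight x, Nat.lt_succ_of_le (wordWeight_le x)⟩]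
  · simp [hatPiMat]
  · intro m _ hm
    have : wordWeight x ≠ m := fun h => hm (Fin.ext h.symm)
    simp [hatPiMat, this]
  · simp

theorem Fmat_mulVec_of_isQExchangeable {I : ℕ} {q : ℝ} (hq : 0 < q) {f : (Fin I → Fin 2) → ℂ}
    (hf : IsQExchangeable q f) : Fmat I q *ᵥ f = f := by
  obtain ⟨S, hS⟩ := hf
  ext x
  have hsum : ∑ z with wordWeight z = wordWeight x, f z =
      Zq I q (wordWeight x) * S (wordWeight x) := by
    rw [Zq, Finset.sum_mul]
    refine Finset.sum_congr rfl fun z hz => ?_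
    have hzx : wordWeight z = wordWeight x := (Finset.mem_filter.1 hz).2
    rw [hS z, hzx]
  have hZ := Zq_wordWeight_ne_zero hq x
  rw [Fmat, ← mulVec_mulVec, hatPiMat_mulVec, PiMat_mulVec, hsum, hS x]
  field_simp

variable {A : Type*} [Ring A] [Algebra ℂ A]

/-- The product `M₀(v) M₀(qv) ⋯ M₁(q^{k+m-1} v)` of `k` factors `M₀` followed by `m` factors `M₁`,
with spectral parameters in geometric progression. -/
noncomputable def sortedProd (dd ee : A) (q : ℂ) : ℕ → ℕ → ℂ → A
  | 0, 0, _ => 1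
  | 0, m + 1, v => Mop dd ee 1 v * sortedProd dd ee q 0 m (q * v)
  | k + 1, m, v => Mop dd ee 0 v * sortedProd dd ee q k m (q * v)

variable {dd ee : A} {q : ℂ}

theorem Mop_one_mul_sortedProd (hq : q ≠ 0)
    (hde : dd * ee - q • (ee * dd) = (1 - q) • (1 : A)) (k m : ℕ)
    {v : ℂ} (hv : v ≠ 0) :
    Mop dd ee 1 v * sortedProd dd ee q k m (q * v) = q ^ k • sortedProd dd ee q k (m + 1) v := by
  induction k generalizing v with
  | zero => simp [sortedProd]
  | succ k ih =>
    simp only [sortedProd]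
    rw [← mul_assoc, Mop_one_mul_Mop_zero hq hde hv, smul_mul_assoc, mul_assoc,
      ih (mul_ne_zero hq hv), mul_smul_comm, smul_smul, pow_succ']

theorem prod_Mop_eq_pow_invCount_smul_sortedProd (hq : q ≠ 0)
    (hde : dd * ee - q • (ee * dd) = (1 - q) • (1 : A)) {n : ℕ}
    {v : ℂ} (hv : v ≠ 0) (x : Fin n → Fin 2) :
    ((List.finRange n).map fun a => Mop dd ee (x a) (v * q ^ (a : ℕ))).prod =
      q ^ invCount x • sortedProd dd ee q (n - wordWeight x) (wordWeight x) v := by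
  induction n generalizing v with
  | zero => simp [sortedProd, invCount, wordWeight]
  | succ n ih =>
    refine Fin.consCases (fun b x => ?_) x
    have htail : ((List.finRange n).map fun a => Mop dd ee (x a) (v * q ^ ((a : ℕ) + 1))).prod =
        q ^ invCount x • sortedProd dd ee q (n - wordWeight x) (wordWeight x) (q * v) := by
      simpa only [pow_succ', mul_left_comm, mul_assoc] using ih (mul_ne_zero hq hv) x
    have hle := wordWeight_le x
    have hweight : wordWeight (Fin.cons b x : Fin (n + 1) → Fin 2) = b + wordWeight x := by
      simp [wordWeight, Fin.sum_univ_succ]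
    simp only [List.finRange_succ, List.map_cons, List.map_map, List.prod_cons, Function.comp_def,
      Fin.cons_zero, Fin.cons_succ, Fin.val_zero, Fin.val_succ, pow_zero, mul_one, htail, hweight,
      invCount_cons]
    fin_cases b
    · have hsub : n + 1 - wordWeight x = n - wordWeight x + 1 := by omega
      simp [hsub, sortedProd]
    · have hsub : n + 1 - (1 + wordWeight x) = n - wordWeight x := by omega
      simp only [Fin.mk_one, card_lt_one_eq_sub_wordWeight, hsub, mul_smul_comm,
        Mop_one_mul_sortedProd hq hde _ _ hv, smul_smul, ← pow_add, add_comm]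

theorem isQExchangeable_siteVec (hq : q ≠ 0)
    (hde : dd * ee - q • (ee * dd) = (1 - q) • (1 : A)) {n : ℕ}
    (φ : A →ₗ[ℂ] ℂ) {v : ℂ} (hv : v ≠ 0) :
    IsQExchangeable q (siteVec dd ee φ ((List.finRange n).map fun a => (a, v * q ^ (a : ℕ)))) :=
  ⟨fun m => φ (sortedProd dd ee q (n - m) m v), fun x => by
    rw [siteVec, siteProd, List.map_map, ← smul_eq_mul, ← map_smul,
      ← prod_Mop_eq_pow_invCount_smul_sortedProd hq hde hv]
    rfl⟩

end Exchangeability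

section Fusion

variable {A : Type*} [Ring A] [Algebra ℂ A]

/-- The vector of `(ℂ²)^{⊗I}` that is mapped by `Π` to the values of `φ` at the fused `M^I_ζ(u)`. -/
noncomputable def unfusedVec (dd ee : A) (φ : A →ₗ[ℂ] ℂ) (I : ℕ) (q : ℝ) (u : ℂ) :
    (Fin I → Fin 2) → ℂ :=
  siteVec dd ee φ ((List.finRange I).map fun a => (a, spectralParam q u a))

theorem PiMat_mulVec_unfusedVec (dd ee : A) (φ : A →ₗ[ℂ] ℂ) (I : ℕ) (q : ℝ) (u : ℂ)
    (m : Fin (I + 1)) :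
    (PiMat I *ᵥ unfusedVec dd ee φ I q u) m = φ (MIop dd ee I q m u) := by
  simp only [PiMat_mulVec, MIop, map_sum, unfusedVec, siteVec, siteProd, List.map_map]
  rfl

variable {I : ℕ} {q : ℝ}

theorem Fmat_mulVec_unfusedVec (hq : 0 < q) {dd ee : A}
    (hde : dd * ee - (q : ℂ) • (ee * dd) = (1 - (q : ℂ)) • (1 : A)) (φ : A →ₗ[ℂ] ℂ) {u : ℂ}
    (hu : u ≠ 0) : Fmat I q *ᵥ unfusedVec dd ee φ I q u = unfusedVec dd ee φ I q u := by
  refine Fmat_mulVec_of_isQExchangeable hq ?_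
  simp only [unfusedVec, spectralParam_eq_mul_pow hq]
  exact isQExchangeable_siteVec (Complex.ofReal_ne_zero.2 hq.ne') hde φ
    (mul_ne_zero hu (qrpow_ne_zero hq _))

theorem permMat_revPerm_mulVec_siteVec (dd ee : A) (φ : A →ₗ[ℂ] ℂ) (w : Fin I → ℂ) :
    permMat I Fin.revPerm *ᵥ siteVec dd ee φ ((List.finRange I).reverse.map fun a => (a, w a.rev)) =
      siteVec dd ee φ ((List.finRange I).map fun a => (a, w a)) := by
  ext x
  simp [permMat_mulVec, siteVec, siteProd, List.finRange_reverse, Function.comp_def]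

theorem Kring_mulVec_unfusedVec (hq : 0 < q) {dd ee : A} {fa fc : ℂ}
    (hde : dd * ee - (q : ℂ) • (ee * dd) = (1 - (q : ℂ)) • (1 : A)) (φ : A →ₗ[ℂ] ℂ)
    (hφ : ∀ m, φ ((fa • ee - fc • dd + 1) * m) = 0) {u : ℂ} (hu : u ≠ 0)
    (hden : ∀ a : Fin I, fc * spectralParam q u a ^ 2 + spectralParam q u a - fa ≠ 0)
    (hreg : ∀ a b : Fin I, a ≠ b → (q : ℂ) * (spectralParam q u a * spectralParam q u b) ≠ 1) :
    Kring I q fa fc u *ᵥ unfusedVec dd ee φ I q u⁻¹ = unfusedVec dd ee φ I q u := by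
  have hreflect := reflectMat_mulVec_siteVec hde φ hφ
    (w := fun a : Fin I => spectralParam q u a.rev) (fun a => spectralParam_ne_zero hq hu _)
    (fun a b hab => hreg _ _ (Fin.rev_injective.ne hab)) (fun a => hden _)
    (List.finRange I).reverse [] (by simp [List.nodup_finRange])
  simp only [inv_spectralParam_rev hq, List.reverse_reverse, List.append_nil] at hreflect
  rw [Kring_eq_permMat_mul_reflectMat hq, ← mulVec_mulVec, unfusedVec, hreflect,
    permMat_revPerm_mulVec_siteVec, unfusedVec]

end Fusion

theorem fused_GZ_first_general {A : Type*} [Ring A] [Algebra ℂ A] (I : ℕ) {q : ℝ} (hq : 0 < q)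
    {fa fc : ℂ} {dd ee : A} (hde : dd * ee - (q : ℂ) • (ee * dd) = (1 - (q : ℂ)) • (1 : A))
    (φ : A →ₗ[ℂ] ℂ) (hφ : ∀ m, φ ((fa • ee - fc • dd + 1) * m) = 0) {u : ℂ} (hu : u ≠ 0)
    (hden : ∀ a : ℕ, 1 ≤ a → a ≤ I →
      fc * (u * qrpow q (((I : ℝ) + 1) / 2 - (a : ℝ))) ^ 2 +
        u * qrpow q (((I : ℝ) + 1) / 2 - (a : ℝ)) - fa ≠ 0)
    (hreg : ∀ m : ℤ, 3 - (I : ℤ) ≤ m → m < (I : ℤ) → u ^ 2 * (q : ℂ) ^ m ≠ 1) (d : Fin (I + 1)) :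
    φ (MIop dd ee I q d u) = ∑ a, KI I q fa fc u d a * φ (MIop dd ee I q a u⁻¹) := by
  have hden' (a : Fin I) : fc * spectralParam q u a ^ 2 + spectralParam q u a - fa ≠ 0 := by
    rw [← Fin.rev_rev a, spectralParam_rev]
    exact_mod_cast hden (a.rev + 1) (by omega) (by omega)
  have hreg' (a b : Fin I) (hab : a ≠ b) :
      (q : ℂ) * (spectralParam q u a * spectralParam q u b) ≠ 1 := by
    rw [spectralParam_mul_spectralParam hq, mul_left_comm,
      ← zpow_one_add₀ (Complex.ofReal_ne_zero.2 hq.ne')]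
    exact hreg _ (by omega) (by omega)
  simp only [← PiMat_mulVec_unfusedVec]
  calc (PiMat I *ᵥ unfusedVec dd ee φ I q u) d
      = (PiMat I *ᵥ Kring I q fa fc u *ᵥ Fmat I q *ᵥ unfusedVec dd ee φ I q u⁻¹) d := by
        rw [Fmat_mulVec_unfusedVec hq hde φ (inv_ne_zero hu),
          Kring_mulVec_unfusedVec hq hde φ hφ hu hden' hreg']
    _ = (KI I q fa fc u *ᵥ PiMat I *ᵥ unfusedVec dd ee φ I q u⁻¹) d := by
        simp only [KI, Fmat, mulVec_mulVec, Matrix.mul_assoc]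

/-- **Fused first Ghoshal–Zamolodchikov relation**: if `𝐝𝐞 − q𝐞𝐝 = (1−q)·1` and the
ℂ-linear functional `W` kills `(𝔞𝐞 − 𝔠𝐝 + 1)·h` for all `h`, then for `u ≠ 0` avoiding
the singular points, `W(M^I_d(u)·h) = Σ_{a=0}^{I} K^I(u)_a^d W(M^I_a(u⁻¹)·h)`. -/
theorem fused_GZ_first {A : Type*} [Ring A] [Algebra ℂ A]
    {H : Type*} [AddCommGroup H] [Module ℂ H] [Module A H]
    [IsScalarTower ℂ A H] [SMulCommClass ℂ A H]
    (I : ℕ) (hI : 1 ≤ I) (q : ℝ) (hq0 : 0 < q) (hq1 : q < 1)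
    (fa fc : ℝ) (dd ee : A)
    (hde : dd * ee - (q : ℂ) • (ee * dd) = (1 - (q : ℂ)) • (1 : A))
    (W : H →ₗ[ℂ] ℂ)
    (hW : ∀ h : H, W (((fa : ℂ) • ee - (fc : ℂ) • dd + 1) • h) = 0)
    (u : ℂ) (hu : u ≠ 0)
    (hden : ∀ a : ℕ, 1 ≤ a → a ≤ I →
      (fc : ℂ) * (u * qrpow q (((I : ℝ) + 1) / 2 - (a : ℝ))) ^ 2 +
        u * qrpow q (((I : ℝ) + 1) / 2 - (a : ℝ)) - (fa : ℂ) ≠ 0)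
    (hreg : ∀ m : ℤ, -(I : ℤ) ≤ m → m ≤ (I : ℤ) → u ^ 2 * (q : ℂ) ^ m ≠ 1)
    (d : Fin (I + 1)) (h : H) :
    W (MIop dd ee I q (d : ℕ) u • h) =
      ∑ a : Fin (I + 1),
        KI I q (fa : ℂ) (fc : ℂ) u d a * W (MIop dd ee I q (a : ℕ) u⁻¹ • h) :=
  fused_GZ_first_general I hq0 hde (W ∘ₗ (LinearMap.toSpanSingleton A H h).restrictScalars ℂ)
    (fun m => by simpa [mul_smul] using hW (m • h)) hu hden
    (fun m hlo hhi => hreg m (by omega) (by omega)) d
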